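/- arXiv:1003.4954 — 5 statements merged into one kernel-verified Lean document; each statement's English description precedes it below -/
import Mathlib

section
/- Let (f_n)_{n∈ℕ} be a q-holonomic sequence of rational functions in ℚ(q). Then the sequence (f_n')_{n∈ℕ} of formal derivatives of f_n with respect to q is also q-holonomic. -/
/-- The formal derivative of a rational function `f = num/denom ∈ ℚ(q)`,
given by the quotient rule `(num' * denom - num * denom') / denom ^ 2`. -/
noncomputable def ratDeriv (f : RatFunc ℚ) : RatFunc ℚ :=
  RatFunc.mk (Polynomial.derivative f.num * f.denom - f.num * Polynomial.derivative f.denom)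
    (f.denom ^ 2)

/-- A sequence `(f_n)` of rational functions in `ℚ(q)` is `q`-holonomic if there are
`d ≥ 0` and bivariate polynomials `c_0, …, c_d ∈ ℚ[u,v]` with `c_d ≠ 0` such that
`c_d(q^n,q) f_{n+d}(q) + ⋯ + c_0(q^n,q) f_n(q) = 0` for all `n`. -/
def IsQHolonomic (f : ℕ → RatFunc ℚ) : Prop :=
  ∃ (d : ℕ) (c : Fin (d + 1) → MvPolynomial (Fin 2) ℚ),
    c (Fin.last d) ≠ 0 ∧
    ∀ n : ℕ,
      ∑ j : Fin (d + 1),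
        (MvPolynomial.aeval ![RatFunc.X ^ n, RatFunc.X] (c j)) * f (n + j) = 0

open scoped nonZeroDivisors

namespace QHol

theorem alg_aux {R : Type*} [CommRing R] (n n' d d' p p' q q' : R) (h : n * q = p * d)
    (h' : n' * q + n * q' = p' * d + p * d') :
    (n' * d - n * d') * q ^ 2 = (p' * q - p * q') * d ^ 2 := by
  linear_combination (d * q) * h' - (d * q' + d' * q) * h

theorem ratDeriv_div_aux (f : RatFunc ℚ) (p q : Polynomial ℚ) (hq : q ≠ 0)
    (hf : f = algebraMap _ _ p / algebraMap _ _ q) :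
    ratDeriv f =
      (algebraMap _ (RatFunc ℚ) (Polynomial.derivative p) * algebraMap _ _ q
        - algebraMap _ _ p * algebraMap _ _ (Polynomial.derivative q)) / (algebraMap _ _ q) ^ 2 := by
  have h := (RatFunc.num_mul_eq_mul_denom_iff (x := f) (p := p) hq).2 hf
  have hd : f.denom ≠ 0 := f.denom_ne_zero
  have h' := congrArg Polynomial.derivative h
  rw [Polynomial.derivative_mul, Polynomial.derivative_mul] at h'
  unfold ratDeriv
  rw [RatFunc.mk_eq_div]
  have hq' := RatFunc.algebraMap_ne_zero hq
  have hd' := RatFunc.algebraMap_ne_zero hd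
  rw [map_pow, div_eq_div_iff (pow_ne_zero _ hd') (pow_ne_zero _ hq')]
  have := congrArg (algebraMap (Polynomial ℚ) (RatFunc ℚ)) (alg_aux _ _ _ _ _ _ _ _ h h')
  simpa only [map_mul, map_sub, map_pow] using this

theorem ratDeriv_div (p q : Polynomial ℚ) (hq : q ≠ 0) :
    ratDeriv (algebraMap _ _ p / algebraMap _ _ q) =
      (algebraMap _ (RatFunc ℚ) (Polynomial.derivative p) * algebraMap _ _ q
        - algebraMap _ _ p * algebraMap _ _ (Polynomial.derivative q)) / (algebraMap _ _ q) ^ 2 :=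
  ratDeriv_div_aux _ p q hq rfl

theorem ratDeriv_add (f g : RatFunc ℚ) : ratDeriv (f + g) = ratDeriv f + ratDeriv g := by
  have hf := RatFunc.algebraMap_ne_zero f.denom_ne_zero
  have hg := RatFunc.algebraMap_ne_zero g.denom_ne_zero
  have h1 : f + g = algebraMap _ _ (f.num * g.denom + g.num * f.denom) /
      algebraMap _ _ (f.denom * g.denom) := by
    conv_lhs => rw [← RatFunc.num_div_denom f, ← RatFunc.num_div_denom g]
    rw [map_add, map_mul, map_mul, map_mul]
    field_simp
  rw [h1, ratDeriv_div _ _ (mul_ne_zero f.denom_ne_zero g.denom_ne_zero)]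
  unfold ratDeriv
  rw [RatFunc.mk_eq_div, RatFunc.mk_eq_div]
  simp only [Polynomial.derivative_mul, map_add, map_mul, map_sub,
    map_pow]
  field_simp
  ring

theorem ratDeriv_mul (f g : RatFunc ℚ) :
    ratDeriv (f * g) = ratDeriv f * g + f * ratDeriv g := by
  have hf := RatFunc.algebraMap_ne_zero f.denom_ne_zero
  have hg := RatFunc.algebraMap_ne_zero g.denom_ne_zero
  have h1 : f * g = algebraMap _ _ (f.num * g.num) /
      algebraMap _ _ (f.denom * g.denom) := by
    conv_lhs => rw [← RatFunc.num_div_denom f, ← RatFunc.num_div_denom g]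
    rw [map_mul, map_mul]
    field_simp
  have h2 : ratDeriv f * g + f * ratDeriv g =
      ratDeriv f * (algebraMap _ _ g.num / algebraMap _ _ g.denom)
      + (algebraMap _ _ f.num / algebraMap _ _ f.denom) * ratDeriv g := by
    rw [RatFunc.num_div_denom f, RatFunc.num_div_denom g]
  rw [h2, h1, ratDeriv_div _ _ (mul_ne_zero f.denom_ne_zero g.denom_ne_zero)]
  unfold ratDeriv
  rw [RatFunc.mk_eq_div, RatFunc.mk_eq_div]
  simp only [Polynomial.derivative_mul, map_add, map_mul, map_sub, map_pow]
  field_simp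
  ring

theorem ratDeriv_algebraMap (p : Polynomial ℚ) :
    ratDeriv (algebraMap _ _ p) = algebraMap _ _ (Polynomial.derivative p) := by
  have := ratDeriv_div p 1 one_ne_zero
  simpa using this

/-- The formal derivative as an additive homomorphism. -/
noncomputable def D : RatFunc ℚ →+ RatFunc ℚ := AddMonoidHom.mk' ratDeriv ratDeriv_add

theorem X_mul_ratDeriv_aeval (n : ℕ) (c : MvPolynomial (Fin 2) ℚ) :
    RatFunc.X * ratDeriv (MvPolynomial.aeval ![RatFunc.X ^ n, RatFunc.X] c) =
      (n : RatFunc ℚ) * MvPolynomial.aeval ![(RatFunc.X : RatFunc ℚ) ^ n, RatFunc.X]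
        (MvPolynomial.X 0 * MvPolynomial.pderiv 0 c) +
      MvPolynomial.aeval ![(RatFunc.X : RatFunc ℚ) ^ n, RatFunc.X]
        (MvPolynomial.X 1 * MvPolynomial.pderiv 1 c) := by
  induction c using MvPolynomial.induction_on with
  | C a =>
    have h : (algebraMap ℚ (RatFunc ℚ) a) = algebraMap _ _ (Polynomial.C a) := by
      exact RingHom.congr_fun (Subsingleton.elim (algebraMap ℚ (RatFunc ℚ))
        ((algebraMap (Polynomial ℚ) (RatFunc ℚ)).comp Polynomial.C)) a
    rw [MvPolynomial.aeval_C, h, ratDeriv_algebraMap]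
    simp
  | add p q hp hq =>
    simp only [map_add, ratDeriv_add, mul_add, hp, hq]
    ring
  | mul_X p i hp =>
    rw [map_mul, ratDeriv_mul, mul_add, ← mul_assoc, hp]
    have hX : ratDeriv (RatFunc.X : RatFunc ℚ) = 1 := by
      rw [← RatFunc.algebraMap_X, ratDeriv_algebraMap]; simp
    have hXn : (RatFunc.X : RatFunc ℚ) * ratDeriv ((RatFunc.X : RatFunc ℚ) ^ n) = (n : RatFunc ℚ) * RatFunc.X ^ n := by
      rw [← RatFunc.algebraMap_X, ← map_pow, ratDeriv_algebraMap]
      rcases n with _ | n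
      · simp
      · simp [Polynomial.derivative_X_pow_succ]; ring
    fin_cases i
    · simp [MvPolynomial.pderiv_X]
      linear_combination (MvPolynomial.aeval ![(RatFunc.X : RatFunc ℚ) ^ n, RatFunc.X] p) * hXn
    · simp [MvPolynomial.pderiv_X]
      rw [hX]; ring

section gen

variable {A M : Type*} [CommRing A] [IsDomain A] [AddCommGroup M] [Module A M]

/-- Saturation of a submodule. -/
def sat (W : Submodule A M) : Submodule A M where
  carrier := {x | ∃ a : A, a ≠ 0 ∧ a • x ∈ W}
  zero_mem' := ⟨1, one_ne_zero, by simp⟩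
  add_mem' := by
    rintro x y ⟨a, ha, hx⟩ ⟨b, hb, hy⟩
    refine ⟨a * b, mul_ne_zero ha hb, ?_⟩
    rw [smul_add, mul_comm a b, mul_smul, mul_comm b a, mul_smul]
    exact W.add_mem (W.smul_mem _ hx) (W.smul_mem _ hy)
  smul_mem' := by
    rintro c x ⟨a, ha, hx⟩
    refine ⟨a, ha, ?_⟩
    rw [smul_comm]
    exact W.smul_mem _ hx

theorem mem_sat_of_smul {W : Submodule A M} {a : A} (ha : a ≠ 0) {x : M}
    (h : a • x ∈ sat W) : x ∈ sat W := by
  obtain ⟨b, hb, h⟩ := h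
  exact ⟨b * a, mul_ne_zero hb ha, by rwa [mul_smul]⟩

theorem le_sat (W : Submodule A M) : W ≤ sat W := fun x hx => ⟨1, one_ne_zero, by simpa⟩

theorem mem_sat_of_rec (W : Submodule A M) (d : ℕ) (e : ℕ → M) (c : ℕ → Fin (d + 1) → A)
    (hc : ∀ k, c k (Fin.last d) ≠ 0)
    (h : ∀ k, ∑ j : Fin (d + 1), c k j • e (k + j) ∈ sat W)
    (h0 : ∀ i < d, e i ∈ sat W) (i : ℕ) : e i ∈ sat W := by
  induction i using Nat.strong_induction_on with
  | _ i ih =>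
    by_cases hi : i < d
    · exact h0 i hi
    · obtain ⟨k, rfl⟩ := Nat.exists_eq_add_of_le' (not_lt.1 hi)
      have := h k
      rw [Fin.sum_univ_castSucc] at this
      refine mem_sat_of_smul (hc k) ?_
      refine ((sat W).add_mem_iff_right ?_).1 this
      refine Submodule.sum_mem _ fun j _ => Submodule.smul_mem _ _ (ih _ ?_)
      have := j.2
      simp

theorem not_linearIndependent (s : Set M) (hs : s.Finite) (v : ℕ → M)
    (hv : ∀ j, v j ∈ sat (Submodule.span A s)) : ¬ LinearIndependent A v := by
  intro hli
  let K := FractionRing A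
  let ι := LocalizedModule.mkLinearMap A⁰ M
  have h1 : LinearIndependent K (ι ∘ v) := hli.of_isLocalizedModule K A⁰ ι
  let V : Submodule K (LocalizedModule A⁰ M) := Submodule.span K (ι '' s)
  have : FiniteDimensional K V := FiniteDimensional.span_of_finite K (hs.image _)
  have h2 : ∀ x ∈ Submodule.span A s, ι x ∈ V := by
    intro x hx
    have : ι x ∈ (Submodule.span A s).map ι := Submodule.mem_map_of_mem hx
    rw [Submodule.map_span] at this
    exact Submodule.span_subset_span A K _ this
  have h3 : ∀ j, ι (v j) ∈ V := by
    intro j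
    obtain ⟨a, ha, h⟩ := hv j
    have := h2 _ h
    rw [map_smul, ← algebraMap_smul K] at this
    refine (Submodule.smul_mem_iff _ ?_).1 this
    simpa using ha
  have h4 : LinearIndependent K (fun j => (⟨ι (v j), h3 j⟩ : V)) :=
    LinearIndependent.of_comp V.subtype h1
  have := h4.finite_of_isNoetherian
  exact not_finite ℕ

end gen

/-- Sequences of rational functions. -/
def Seq : Type := ℕ → RatFunc ℚ

noncomputable instance : AddCommGroup Seq := inferInstanceAs (AddCommGroup (ℕ → RatFunc ℚ))

/-- Evaluation of a bivariate polynomial along `(q^n, q)`. -/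
noncomputable def ev : MvPolynomial (Fin 2) ℚ →+* (ℕ → RatFunc ℚ) :=
  RingHom.pi fun n =>
    (MvPolynomial.aeval ![(RatFunc.X : RatFunc ℚ) ^ n, RatFunc.X]).toRingHom

noncomputable instance : Module (MvPolynomial (Fin 2) ℚ) Seq :=
  Module.compHom (ℕ → RatFunc ℚ) ev

theorem smul_apply (c : MvPolynomial (Fin 2) ℚ) (g : Seq) (n : ℕ) :
    (c • g) n = MvPolynomial.aeval ![(RatFunc.X : RatFunc ℚ) ^ n, RatFunc.X] c * g n := rfl

theorem add_apply (g h : Seq) (n : ℕ) : (g + h) n = g n + h n := rfl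

theorem sum_apply {ι : Type*} (s : Finset ι) (g : ι → Seq) (n : ℕ) :
    (∑ i ∈ s, g i) n = ∑ i ∈ s, g i n :=
  Finset.sum_apply n s (fun i => (g i : ℕ → RatFunc ℚ))

/-- The shifted sequence. -/
def sh (g : ℕ → RatFunc ℚ) (i : ℕ) : Seq := fun n => g (n + i)

/-- The shifted sequence times `n`. -/
noncomputable def nsh (g : ℕ → RatFunc ℚ) (i : ℕ) : Seq := fun n => (n : RatFunc ℚ) * g (n + i)

/-- Shift on polynomials. -/
noncomputable def tau (k : ℕ) : MvPolynomial (Fin 2) ℚ →ₐ[ℚ] MvPolynomial (Fin 2) ℚ :=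
  MvPolynomial.aeval ![MvPolynomial.X 0 * MvPolynomial.X 1 ^ k, MvPolynomial.X 1]

theorem aeval_tau (k n : ℕ) (c : MvPolynomial (Fin 2) ℚ) :
    MvPolynomial.aeval ![(RatFunc.X : RatFunc ℚ) ^ n, RatFunc.X] (tau k c) =
      MvPolynomial.aeval ![(RatFunc.X : RatFunc ℚ) ^ (n + k), RatFunc.X] c := by
  unfold tau
  rw [← AlgHom.comp_apply]
  congr 1
  ext i
  fin_cases i <;> simp [pow_add]

theorem tau_ne_zero (k : ℕ) (c : MvPolynomial (Fin 2) ℚ) (hc : c ≠ 0) : tau k c ≠ 0 := by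
  intro h
  -- apply the map to the fraction field sending u to u / v ^ k
  let F := FractionRing (MvPolynomial (Fin 2) ℚ)
  let m := algebraMap (MvPolynomial (Fin 2) ℚ) F
  have hm : Function.Injective m := IsFractionRing.injective _ _
  have hX : m (MvPolynomial.X 1) ≠ 0 := by
    rw [Ne, map_eq_zero_iff m hm]; exact MvPolynomial.X_ne_zero 1
  let g : MvPolynomial (Fin 2) ℚ →ₐ[ℚ] F := MvPolynomial.aeval
    ![m (MvPolynomial.X 0) / m (MvPolynomial.X 1) ^ k, m (MvPolynomial.X 1)]
  have hg : g.comp (tau k) = Algebra.algHom ℚ (MvPolynomial (Fin 2) ℚ) F := by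
    ext i
    fin_cases i
    · simp only [g, tau, AlgHom.comp_apply, MvPolynomial.aeval_X]
      simp [m]
      exact div_mul_cancel₀ _ (pow_ne_zero _ hX)
    · simp [g, tau, m]
      rfl
  have h2 : m c = 0 := by
    have : g (tau k c) = m c := DFunLike.congr_fun hg c
    rw [← this, h, map_zero]
  exact hc ((map_eq_zero_iff m hm).1 h2)

theorem isQHolonomic_of_not_li (g : ℕ → RatFunc ℚ)
    (h : ¬ LinearIndependent (MvPolynomial (Fin 2) ℚ) (sh g)) : IsQHolonomic g := by
  rw [linearIndependent_iff] at h
  push Not at h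
  obtain ⟨l, hl, hl0⟩ := h
  have hne : l.support.Nonempty := Finsupp.support_nonempty_iff.2 hl0
  refine ⟨l.support.max' hne, fun j => l j, ?_, ?_⟩
  · have := Finset.max'_mem _ hne
    simpa using this
  · intro n
    rw [Fin.sum_univ_eq_sum_range (fun j =>
      MvPolynomial.aeval ![(RatFunc.X : RatFunc ℚ) ^ n, RatFunc.X] (l j) * g (n + j))]
    have h1 := congrFun hl n
    rw [Finsupp.linearCombination_apply, Finsupp.sum, sum_apply] at h1
    change _ = (0 : RatFunc ℚ) at h1
    rw [← h1]
    symm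
    refine Finset.sum_subset ?_ ?_
    · intro j hj
      have := Finset.le_max' _ j hj
      simp; omega
    · intro j _ hj
      rw [smul_apply]
      simp [Finsupp.notMem_support_iff.1 hj]

end QHol

open QHol in
/-- The derivative with respect to `q` of a `q`-holonomic sequence is `q`-holonomic. -/
theorem deriv_qHolonomic (f : ℕ → RatFunc ℚ) (hf : IsQHolonomic f) :
    IsQHolonomic (fun n => ratDeriv (f n)) := by
  obtain ⟨d, c, hc, h⟩ := hf
  apply isQHolonomic_of_not_li
  set g : ℕ → RatFunc ℚ := fun n => ratDeriv (f n) with hg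
  let s : Set Seq := sh f '' Set.Iio d ∪ nsh f '' Set.Iio d ∪ sh g '' Set.Iio d
  have hs : s.Finite := (((Set.finite_Iio d).image _).union ((Set.finite_Iio d).image _)).union
    ((Set.finite_Iio d).image _)
  have hsub : ∀ x ∈ s, x ∈ sat (Submodule.span (MvPolynomial (Fin 2) ℚ) s) :=
    fun x hx => le_sat _ (Submodule.subset_span hx)
  have hrel : ∀ k n, ∑ j : Fin (d + 1),
      MvPolynomial.aeval ![(RatFunc.X : RatFunc ℚ) ^ n, RatFunc.X] (tau k (c j))
        * f (n + (k + j)) = 0 := by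
    intro k n
    rw [← h (n + k)]
    refine Finset.sum_congr rfl fun j _ => ?_
    rw [aeval_tau, add_assoc]
  have hF : ∀ i, sh f i ∈ sat (Submodule.span (MvPolynomial (Fin 2) ℚ) s) := by
    refine mem_sat_of_rec _ d _ (fun k j => tau k (c j)) (fun k => tau_ne_zero _ _ hc) ?_ ?_
    · intro k
      convert Submodule.zero_mem _
      funext n
      rw [sum_apply]
      exact hrel k n
    · exact fun i hi => hsub _ (Or.inl (Or.inl ⟨i, hi, rfl⟩))
  have hN : ∀ i, nsh f i ∈ sat (Submodule.span (MvPolynomial (Fin 2) ℚ) s) := by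
    refine mem_sat_of_rec _ d _ (fun k j => tau k (c j)) (fun k => tau_ne_zero _ _ hc) ?_ ?_
    · intro k
      convert Submodule.zero_mem _
      funext n
      rw [sum_apply]
      change _ = (0 : RatFunc ℚ)
      rw [← mul_zero (n : RatFunc ℚ), ← hrel k n, Finset.mul_sum]
      refine Finset.sum_congr rfl fun j _ => ?_
      rw [smul_apply, nsh]
      ring
    · exact fun i hi => hsub _ (Or.inl (Or.inr ⟨i, hi, rfl⟩))
  refine not_linearIndependent s hs _ ?_
  refine mem_sat_of_rec _ d _ (fun k j => MvPolynomial.X 1 * tau k (c j))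
    (fun k => mul_ne_zero (MvPolynomial.X_ne_zero 1) (tau_ne_zero _ _ hc)) ?_ ?_
  · intro k
    have hz : ∑ j : Fin (d + 1), (MvPolynomial.X 1 * tau k (c j)) • sh g (k + j) +
        ∑ j : Fin (d + 1),
          ((MvPolynomial.X 0 * MvPolynomial.pderiv 0 (tau k (c j))) • nsh f (k + j) +
          (MvPolynomial.X 1 * MvPolynomial.pderiv 1 (tau k (c j))) • sh f (k + j)) = 0 := by
      rw [← Finset.sum_add_distrib]
      funext n
      rw [sum_apply]
      change _ = (0 : RatFunc ℚ)
      have h1 := congrArg (fun x => RatFunc.X * D x) (hrel k n)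
      simp only [map_zero, mul_zero, map_sum, Finset.mul_sum] at h1
      rw [← h1]
      refine Finset.sum_congr rfl fun j _ => ?_
      change _ = RatFunc.X * ratDeriv _
      rw [ratDeriv_mul, mul_add, ← mul_assoc, X_mul_ratDeriv_aeval]
      simp only [add_apply, smul_apply, nsh, sh, hg, map_mul, MvPolynomial.aeval_X]
      simp
      ring
    rw [eq_neg_of_add_eq_zero_left hz]
    refine Submodule.neg_mem _ (Submodule.sum_mem _ fun j _ => Submodule.add_mem _ ?_ ?_)
    · exact Submodule.smul_mem _ _ (hN _)
    · exact Submodule.smul_mem _ _ (hF _)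
  · exact fun i hi => hsub _ (Or.inr ⟨i, hi, rfl⟩)
end

section
/- Let l ≥ 1, let B be an l×l matrix whose entries are polynomials in ℂ[x], and let (x_n)_{n∈ℕ} be a sequence of vectors in ℂ^l satisfying the first-order linear recursion x_{n+1} = B(n)·x_n for all n ∈ ℕ, where B(n) denotes the complex matrix obtained by evaluating every entry of B at x = n. Then for every index i ∈ {1,…,l}, the sequence of complex numbers ((x_n)_i)_{n∈ℕ} given by the i-th coordinate of x_n is holonomic. -/
/-- A sequence `(g_n)` of complex numbers is holonomic if there are `d ≥ 0` and
polynomials `c_0, …, c_d ∈ ℂ[x]` with `c_d ≠ 0` such that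
`c_d(n) g_{n+d} + ⋯ + c_0(n) g_n = 0` for all `n`. -/
def IsHolonomic (g : ℕ → ℂ) : Prop :=
  ∃ (d : ℕ) (c : Fin (d + 1) → Polynomial ℂ),
    c (Fin.last d) ≠ 0 ∧
    ∀ n : ℕ, ∑ j : Fin (d + 1), (c j).eval (n : ℂ) * g (n + j) = 0

/-- Polynomial row vectors `v_k` with `(x_{n+k})_i = v_k(n) · x_n`. -/
noncomputable def rowVec {l : ℕ} (B : Matrix (Fin l) (Fin l) (Polynomial ℂ)) (i : Fin l) :
    ℕ → Fin l → Polynomial ℂ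
  | 0 => Pi.single i 1
  | k + 1 => Matrix.vecMul (fun j => (rowVec B i k j).comp (Polynomial.X + 1)) B

lemma rowVec_spec {l : ℕ} (B : Matrix (Fin l) (Fin l) (Polynomial ℂ))
    (x : ℕ → (Fin l → ℂ))
    (hx : ∀ n : ℕ, x (n + 1) = (B.map (Polynomial.eval (n : ℂ))).mulVec (x n))
    (i : Fin l) (k : ℕ) : ∀ n : ℕ,
    x (n + k) i = ∑ j, (rowVec B i k j).eval (n : ℂ) * x n j := by
  induction k with
  | zero =>
    intro n
    rw [Finset.sum_eq_single i]
    · simp [rowVec]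
    · intro b _ hb
      simp [rowVec, Pi.single_apply, hb]
    · simp
  | succ k ih =>
    intro n
    have h1 : n + (k + 1) = (n + 1) + k := by omega
    rw [h1, ih (n + 1)]
    simp only [hx n, rowVec, Matrix.mulVec, Matrix.vecMul, dotProduct, Matrix.map_apply,
      Polynomial.eval_finsetSum, Polynomial.eval_mul, Polynomial.eval_comp, Polynomial.eval_add,
      Polynomial.eval_X, Polynomial.eval_one, Nat.cast_add, Nat.cast_one, Finset.mul_sum,
      Finset.sum_mul]
    rw [Finset.sum_comm]
    refine Finset.sum_congr rfl fun a _ => Finset.sum_congr rfl fun b _ => ?_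
    ring

/-- If a sequence of vectors `x_n ∈ ℂˡ` satisfies a first order linear recursion
`x_{n+1} = B(n) x_n` with `B` an `l × l` matrix of polynomials, then every coordinate
of `x_n` is a holonomic sequence. -/
theorem coord_of_matrix_recursion_isHolonomic
    (l : ℕ) (hl : 1 ≤ l) (B : Matrix (Fin l) (Fin l) (Polynomial ℂ))
    (x : ℕ → (Fin l → ℂ))
    (hx : ∀ n : ℕ, x (n + 1) = (B.map (Polynomial.eval (n : ℂ))).mulVec (x n)) :
    ∀ i : Fin l, IsHolonomic (fun n => x n i) := by
  intro i
  have hdep : ¬ LinearIndependent (Polynomial ℂ) (fun k : Fin (l + 1) => rowVec B i k) := by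
    intro h
    have := h.fintype_card_le_finrank
    simp at this
  obtain ⟨c, hc, k, hk⟩ := Fintype.not_linearIndependent_iff.mp hdep
  let c' : ℕ → Polynomial ℂ := fun m => if h : m < l + 1 then c ⟨m, h⟩ else 0
  have hc' : ∀ m : Fin (l + 1), c' m = c m := fun m => dif_pos m.isLt
  have hkl : (k : ℕ) ≤ l := by omega
  classical
  let d := Nat.findGreatest (fun m => c' m ≠ 0) l
  have hd : c' d ≠ 0 := Nat.findGreatest_spec (P := fun m => c' m ≠ 0) hkl (by rw [hc']; exact hk)
  have hdl : d ≤ l := Nat.findGreatest_le l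
  have hgt : ∀ m, d < m → m ≤ l → c' m = 0 := fun m h1 h2 => by
    simpa using Nat.findGreatest_is_greatest (P := fun m => c' m ≠ 0) h1 h2
  refine ⟨d, fun j => c' j, by simpa using hd, fun n => ?_⟩
  have e1 := Fin.sum_univ_eq_sum_range (fun m => (c' m).eval (n : ℂ) * x (n + m) i) (d + 1)
  have e2 := Fin.sum_univ_eq_sum_range (fun m => (c' m).eval (n : ℂ) * x (n + m) i) (l + 1)
  have e3 : ∑ m ∈ Finset.range (d + 1), (c' m).eval (n : ℂ) * x (n + m) i
      = ∑ m ∈ Finset.range (l + 1), (c' m).eval (n : ℂ) * x (n + m) i := by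
    refine Finset.sum_subset (fun m hm => ?_) (fun m hm hm' => ?_)
    · simp only [Finset.mem_range] at *
      omega
    · simp only [Finset.mem_range] at *
      rw [hgt m (by omega) (by omega)]
      simp
  refine e1.trans (e3.trans (e2.symm.trans ?_))
  simp only [hc', rowVec_spec B x hx i, Finset.mul_sum]
  rw [Finset.sum_comm]
  refine Finset.sum_eq_zero fun j _ => ?_
  have h := congrArg (Polynomial.eval (n : ℂ)) (congrFun hc j)
  simp only [Finset.sum_apply, Pi.smul_apply, smul_eq_mul, Polynomial.eval_finsetSum,
    Polynomial.eval_mul, Pi.zero_apply, Polynomial.eval_zero] at h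
  simp only [← mul_assoc]
  rw [← Finset.sum_mul, h, zero_mul]
end

section
/- Let ω be a nonzero complex number and suppose that the sequence (ω^{n²})_{n∈ℕ} is holonomic, i.e., there exist an integer d ≥ 0 and polynomials c_0, …, c_d ∈ ℂ[x] with c_d ≠ 0 such that c_d(n)·ω^{(n+d)²} + ⋯ + c_0(n)·ω^{n²} = 0 for all n ∈ ℕ. Then ω is a root of unity, i.e., ω^m = 1 for some integer m ≥ 1. -/
/-- The shift operator on complex sequences. -/
def seqShift : Module.End ℂ (ℕ → ℂ) where
  toFun f := fun n => f (n + 1)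
  map_add' _ _ := rfl
  map_smul' _ _ := rfl

theorem seqShift_pow_apply (l : ℂ) (k : ℕ) : ∀ g : ℂ → ℂ,
    ((seqShift - l • (1 : Module.End ℂ (ℕ → ℂ))) ^ k) (fun n : ℕ => g n * l ^ n) =
      fun n : ℕ => l ^ k * ((fwdDiff (1 : ℂ))^[k] g) n * l ^ n := by
  induction k with
  | zero => intro g; simp
  | succ k ih =>
    intro g
    have h1 : (seqShift - l • (1 : Module.End ℂ (ℕ → ℂ))) (fun n : ℕ => g n * l ^ n) =
        l • (fun n : ℕ => (fwdDiff (1 : ℂ) g) n * l ^ n) := by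
      funext n
      simp [seqShift, fwdDiff]
      ring
    rw [pow_succ, Module.End.mul_apply, h1, map_smul, ih, Function.iterate_succ_apply]
    funext n
    simp
    ring

theorem expPoly_mem (l : ℂ) (p : Polynomial ℂ) :
    (fun n : ℕ => p.eval (n : ℂ) * l ^ n) ∈ seqShift.maxGenEigenspace l := by
  rw [Module.End.mem_maxGenEigenspace]
  refine ⟨p.natDegree + 1, ?_⟩
  rw [seqShift_pow_apply l _ (fun z => p.eval z)]
  have := Polynomial.fwdDiff_iter_eq_zero_of_degree_lt (Nat.lt_succ_self p.natDegree)
  funext n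
  have h2 := congrFun this (n : ℂ)
  simp only [Pi.zero_apply, Nat.succ_eq_add_one] at h2 ⊢
  rw [h2]; simp

/-- If `ω ≠ 0` and the sequence `(ω^{n²})` is holonomic, i.e. there are `d ≥ 0` and
polynomials `c_0, …, c_d ∈ ℂ[x]` with `c_d ≠ 0` and
`c_d(n) ω^{(n+d)²} + ⋯ + c_0(n) ω^{n²} = 0` for all `n`, then `ω` is a root of
unity: `ω^m = 1` for some `m ≥ 1`. -/
theorem rootOfUnity_of_holonomic_omega_pow_sq (ω : ℂ) (hω : ω ≠ 0)
    (h : ∃ (d : ℕ) (c : Fin (d + 1) → Polynomial ℂ),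
      c (Fin.last d) ≠ 0 ∧
      ∀ n : ℕ, ∑ j : Fin (d + 1), (c j).eval (n : ℂ) * ω ^ ((n + (j : ℕ)) ^ 2) = 0) :
    ∃ m : ℕ, 1 ≤ m ∧ ω ^ m = 1 := by
  obtain ⟨d, c, hc, h⟩ := h
  by_contra! hm
  have key : ∀ a b : ℕ, a < b → ω ^ (2 * a) ≠ ω ^ (2 * b) := by
    intro a b hab he
    refine hm (2 * (b - a)) (by omega) ?_
    have : ω ^ (2 * b) = ω ^ (2 * a) * ω ^ (2 * (b - a)) := by
      rw [← pow_add]; congr 1; omega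
    rw [this] at he
    exact (mul_eq_left₀ (pow_ne_zero _ hω)).1 he.symm
  have inj : Function.Injective (fun j : Fin (d + 1) => ω ^ (2 * (j : ℕ))) := by
    intro a b hab
    rcases lt_trichotomy a b with h1 | h1 | h1
    · exact absurd hab (key _ _ h1)
    · exact h1
    · exact absurd hab.symm (key _ _ h1)
  have ind := (Module.End.independent_maxGenEigenspace seqShift).comp inj
  rw [iSupIndep_iff_finsetSum_eq_zero_imp_eq_zero] at ind
  have hz := ind Finset.univ
    (fun j => fun n : ℕ => (Polynomial.C (ω ^ ((j : ℕ) ^ 2)) * c j).eval (n : ℂ)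
      * (ω ^ (2 * (j : ℕ))) ^ n) (fun j _ => expPoly_mem _ _) (by
      funext n
      have h0 : ω ^ (n ^ 2) ≠ 0 := pow_ne_zero _ hω
      apply mul_left_cancel₀ h0
      simp only [Finset.sum_apply, Pi.zero_apply, mul_zero]
      rw [← h n, Finset.mul_sum]
      refine Finset.sum_congr rfl fun j _ => ?_
      simp only [Polynomial.eval_mul, Polynomial.eval_C]
      ring) (Fin.last d) (Finset.mem_univ _)
  apply hc
  apply Polynomial.eq_zero_of_infinite_isRoot
  refine (Set.infinite_range_of_injective (Nat.cast_injective (R := ℂ))).mono ?_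
  rintro _ ⟨n, rfl⟩
  have h3 := congrFun hz n
  simpa [hω] using h3
end

section
/- Let N ≥ 1, let v = e^{iπ/N} ∈ ℂ, and let a_1, …, a_r be natural numbers written as a_i = A_i·N + α_i with A_i, α_i ∈ ℕ and 0 ≤ α_i < N. Set a = a_1 + ⋯ + a_r and α = α_1 + ⋯ + α_r. Then the value of the balanced quantum multinomial at v, namely v^{−2Σ_{1≤j<k≤r} a_j a_k}·G(a; a_1,…,a_r)(v²) (with the convention A² = v, i.e. A⁴ = q = v²), equals (−1)^{Σ_{1≤j<k≤r}(N·A_jA_k + α_jA_k + A_jα_k)} · ((A_1+⋯+A_r)! / (A_1!⋯A_r!)) · v^{−2Σ_{1≤j<k≤r} α_j α_k}·G(α; α_1,…,α_r)(v²). Correction to the exponents: the balanced multinomial in the variable v = A² is v^{−Σ_{j<k} a_j a_k}·G(a; a_1,…,a_r)(v²), and the identity reads v^{−Σ_{j<k} a_j a_k}·G(a; a_1,…,a_r)(v²) = (−1)^{Σ_{j<k}(N·A_jA_k + α_jA_k + A_jα_k)} · ((ΣA_i)!/(∏A_i!)) · v^{−Σ_{j<k} α_j α_k}·G(α; α_1,…,α_r)(v²).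 -/
/-- The set of ordered pairs `(j,k)` with `j < k` in `Fin r × Fin r`. -/
def finPairs (r : ℕ) : Finset (Fin r × Fin r) :=
  Finset.filter (fun p : Fin r × Fin r => p.1 < p.2) Finset.univ

open Polynomial in
lemma qm_factor_base (M : ℕ) (q : ℂ) (hq : q ^ (M + 1) = 1) (B : ℕ) :
    ∃ R : ℂ[X], (∏ j ∈ Finset.range (B * (M + 1)), (1 - X ^ (j + 1) : ℂ[X])) =
        (1 - X ^ (M + 1)) ^ B * R ∧
      R.eval q = (B.factorial : ℂ) * (∏ j ∈ Finset.range M, (1 - q ^ (j + 1))) ^ B := by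
  induction B with
  | zero => exact ⟨1, by simp, by simp⟩
  | succ B ih =>
    obtain ⟨R, h1, h2⟩ := ih
    have hqB : q ^ (B * (M + 1)) = 1 := by rw [mul_comm, pow_mul, hq, one_pow]
    refine ⟨R * (∏ j ∈ Finset.range M, (1 - X ^ (B * (M + 1) + j + 1))) *
      ∑ i ∈ Finset.range (B + 1), (X ^ (M + 1)) ^ i, ?_, ?_⟩
    · have h3 : (1 - X ^ (B * (M + 1) + M + 1) : ℂ[X]) =
          (1 - X ^ (M + 1)) * ∑ i ∈ Finset.range (B + 1), (X ^ (M + 1)) ^ i := by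
        rw [mul_neg_geom_sum, ← pow_mul]
        congr 2
        ring
      rw [show (B + 1) * (M + 1) = B * (M + 1) + (M + 1) by ring, Finset.prod_range_add, h1,
        Finset.prod_range_succ, h3]
      ring
    · have h4 : (∏ j ∈ Finset.range M, (1 - X ^ (B * (M + 1) + j + 1) : ℂ[X])).eval q =
          ∏ j ∈ Finset.range M, (1 - q ^ (j + 1)) := by
        rw [eval_prod]
        refine Finset.prod_congr rfl fun j _ => ?_
        rw [add_assoc, pow_add]
        simp [hqB]
      rw [eval_mul, eval_mul, h4, h2]
      simp only [eval_finsetSum, eval_pow, eval_X, hq, one_pow, Finset.sum_const,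
        Finset.card_range, nsmul_eq_mul, mul_one, Nat.factorial_succ]
      push_cast
      ring

open Polynomial in
lemma qm_factor (M : ℕ) (q : ℂ) (hq : q ^ (M + 1) = 1) (B β : ℕ) :
    ∃ R : ℂ[X], (∏ j ∈ Finset.range (B * (M + 1) + β), (1 - X ^ (j + 1) : ℂ[X])) =
        (1 - X ^ (M + 1)) ^ B * R ∧
      R.eval q = (B.factorial : ℂ) * (∏ j ∈ Finset.range M, (1 - q ^ (j + 1))) ^ B *
        ∏ j ∈ Finset.range β, (1 - q ^ (j + 1)) := by
  obtain ⟨R, h1, h2⟩ := qm_factor_base M q hq B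
  have hqB : q ^ (B * (M + 1)) = 1 := by rw [mul_comm, pow_mul, hq, one_pow]
  refine ⟨R * ∏ j ∈ Finset.range β, (1 - X ^ (B * (M + 1) + j + 1)), ?_, ?_⟩
  · rw [Finset.prod_range_add, h1, mul_assoc]
  · rw [eval_mul, h2, eval_prod]
    congr 1
    refine Finset.prod_congr rfl fun j _ => ?_
    rw [add_assoc, pow_add]
    simp [hqB]

open Polynomial in
/-- The unbalanced identity at a primitive root of unity. -/
lemma qm_main (N : ℕ) (hN : 1 ≤ N) (q : ℂ) (hq : IsPrimitiveRoot q N)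
    (r : ℕ) (A α : Fin r → ℕ) (hα : ∀ i, α i < N)
    (a : Fin r → ℕ) (ha : ∀ i, a i = A i * N + α i)
    (G Gα : Polynomial ℤ)
    (hG : G * ∏ i, ∏ j ∈ Finset.range (a i), (1 - Polynomial.X ^ (j + 1)) =
      ∏ j ∈ Finset.range (∑ i, a i), (1 - Polynomial.X ^ (j + 1)))
    (hGα : Gα * ∏ i, ∏ j ∈ Finset.range (α i), (1 - Polynomial.X ^ (j + 1)) =
      ∏ j ∈ Finset.range (∑ i, α i), (1 - Polynomial.X ^ (j + 1))) :
    aeval q G = (Nat.multinomial Finset.univ A : ℂ) * aeval q Gα := by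
  obtain ⟨M, rfl⟩ : ∃ M, N = M + 1 := ⟨N - 1, by omega⟩
  have hq1 := hq.pow_eq_one
  set c : ℂ := ∏ j ∈ Finset.range M, (1 - q ^ (j + 1)) with hc
  have hne : ∀ n, n < M + 1 → (∏ j ∈ Finset.range n, (1 - q ^ (j + 1))) ≠ 0 := by
    intro n hn
    rw [Finset.prod_ne_zero_iff]
    intro j hj h0
    have hj := Finset.mem_range.1 hj
    exact hq.pow_ne_one_of_pos_of_lt (Nat.succ_ne_zero j) (by omega) (sub_eq_zero.1 h0).symm
  have hc0 : c ≠ 0 := hne M (by omega)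
  choose R hR1 hR2 using fun B β => qm_factor M q hq1 B β
  -- evaluate the identity for the residues
  have hE : aeval q Gα * ∏ i, ∏ j ∈ Finset.range (α i), (1 - q ^ (j + 1)) =
      ∏ j ∈ Finset.range (∑ i, α i), (1 - q ^ (j + 1)) := by
    have := congrArg (aeval q) hGα
    simpa [map_prod] using this
  -- map the identity to ℂ[X]
  have hG' := congrArg (Polynomial.map (Int.castRingHom ℂ)) hG
  simp only [Polynomial.map_mul, Polynomial.map_prod, Polynomial.map_sub, Polynomial.map_one,
    Polynomial.map_pow, Polynomial.map_X] at hG'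
  have hsum : ∑ i, a i = (∑ i, A i) * (M + 1) + ∑ i, α i := by
    simp only [ha, Finset.sum_add_distrib, Finset.sum_mul]
  have hX : (1 - X ^ (M + 1) : ℂ[X]) ≠ 0 := by
    intro h
    have := congrArg (eval 0) h
    simp at this
  have hev : ∀ P : ℤ[X], aeval q P = (P.map (Int.castRingHom ℂ)).eval q := by
    intro P
    rw [eval_map, aeval_def]
    rfl
  have hprod : (∏ i, ∏ j ∈ Finset.range (a i), (1 - X ^ (j + 1) : ℂ[X])) =
      (1 - X ^ (M + 1)) ^ (∑ i, A i) * ∏ i, R (A i) (α i) := by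
    rw [← Finset.prod_pow_eq_pow_sum, ← Finset.prod_mul_distrib]
    refine Finset.prod_congr rfl fun i _ => ?_
    rw [ha i, hR1]
  have hprodev : (∏ i, R (A i) (α i)).eval q = (∏ i, ((A i).factorial : ℂ)) * c ^ (∑ i, A i) *
      ∏ i, ∏ j ∈ Finset.range (α i), (1 - q ^ (j + 1)) := by
    rw [eval_prod, ← Finset.prod_pow_eq_pow_sum, ← Finset.prod_mul_distrib,
      ← Finset.prod_mul_distrib]
    exact Finset.prod_congr rfl fun i _ => hR2 _ _
  have hF : (∏ i, ((A i).factorial : ℂ)) ≠ 0 :=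
    Finset.prod_ne_zero_iff.2 fun i _ => by exact_mod_cast (A i).factorial_ne_zero
  have hP : (∏ i, ∏ j ∈ Finset.range (α i), (1 - q ^ (j + 1))) ≠ 0 :=
    Finset.prod_ne_zero_iff.2 fun i _ => hne _ (hα i)
  -- split off the full periods
  have hkey : G.map (Int.castRingHom ℂ) * ∏ i, R (A i) (α i) =
      (1 - X ^ (M + 1)) ^ ((∑ i, α i) / (M + 1)) *
        R (∑ i, A i + (∑ i, α i) / (M + 1)) ((∑ i, α i) % (M + 1)) := by
    apply mul_left_cancel₀ (pow_ne_zero (∑ i, A i) hX)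
    rw [mul_left_comm, ← hprod, hG', ← mul_assoc, ← pow_add, ← hR1, hsum]
    congr 2
    have := Nat.div_add_mod' (∑ i, α i) (M + 1)
    rw [add_mul]
    omega
  have hkey2 := congrArg (eval q) hkey
  rw [eval_mul, hprodev, ← hev, eval_mul, hR2] at hkey2
  rcases lt_or_ge (∑ i, α i) (M + 1) with hlt | hge
  · rw [Nat.div_eq_of_lt hlt, Nat.mod_eq_of_lt hlt] at hkey2
    simp only [pow_zero, add_zero, eval_one, one_mul] at hkey2
    rw [← hE] at hkey2
    have hm : (∏ i, ((A i).factorial : ℂ)) * (Nat.multinomial Finset.univ A : ℂ) =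
        ((∑ i, A i).factorial : ℂ) := by
      exact_mod_cast Nat.multinomial_spec Finset.univ A
    rw [← hm] at hkey2
    have hcS := pow_ne_zero (∑ i, A i) hc0
    apply mul_right_cancel₀ (mul_ne_zero (mul_ne_zero hF hcS) hP)
    rw [hkey2]
    ring
  · have hd : (∑ i, α i) / (M + 1) ≠ 0 := (Nat.div_pos hge (Nat.succ_pos M)).ne'
    have hz : eval q ((1 - X ^ (M + 1) : ℂ[X]) ^ ((∑ i, α i) / (M + 1))) = 0 := by
      simp [hq1, hd]
    rw [hz, zero_mul] at hkey2
    have h1 : aeval q G = 0 := (mul_eq_zero.1 hkey2).resolve_right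
      (mul_ne_zero (mul_ne_zero hF (pow_ne_zero _ hc0)) hP)
    have h2 : (∏ j ∈ Finset.range (∑ i, α i), (1 - q ^ (j + 1))) = 0 :=
      Finset.prod_eq_zero (Finset.mem_range.2 (show M < _ by omega)) (by rw [hq1, sub_self])
    rw [h2] at hE
    have h3 : aeval q Gα = 0 := (mul_eq_zero.1 hE).resolve_right hP
    rw [h1, h3, mul_zero]

/-- Evaluation of the balanced quantum multinomial at `v = e^{iπ/N}`: with
`a_i = A_i N + α_i`, `0 ≤ α_i < N`, and `G`, `Gα` the Gaussian multinomial
polynomials for the `a_i`'s and the `α_i`'s respectively (characterized by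
`G(x) ∏_i ∏_{j=1}^{a_i} (1-x^j) = ∏_{j=1}^{a}(1-x^j)`), the balanced quantum
multinomial `v^{-Σ_{j<k} a_j a_k} G(a;a_1,…,a_r)(v²)` equals
`(-1)^{Σ_{j<k}(N A_j A_k + α_j A_k + A_j α_k)}` times the ordinary multinomial
coefficient of the `A_i`'s times `v^{-Σ_{j<k} α_j α_k} G(α;α_1,…,α_r)(v²)`. -/
theorem balanced_quantum_multinomial_at_root_of_unity
    (N : ℕ) (hN : 1 ≤ N) (r : ℕ) (A α : Fin r → ℕ) (hα : ∀ i, α i < N)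
    (a : Fin r → ℕ) (ha : ∀ i, a i = A i * N + α i)
    (G Gα : Polynomial ℤ)
    (hG : G * ∏ i, ∏ j ∈ Finset.range (a i), (1 - Polynomial.X ^ (j + 1)) =
      ∏ j ∈ Finset.range (∑ i, a i), (1 - Polynomial.X ^ (j + 1)))
    (hGα : Gα * ∏ i, ∏ j ∈ Finset.range (α i), (1 - Polynomial.X ^ (j + 1)) =
      ∏ j ∈ Finset.range (∑ i, α i), (1 - Polynomial.X ^ (j + 1)))
    (v : ℂ) (hv : v = Complex.exp (Real.pi * Complex.I / N)) :
    v ^ (-((∑ p ∈ finPairs r, a p.1 * a p.2 : ℕ) : ℤ)) * Polynomial.aeval (v ^ 2) G =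
      (-1 : ℂ) ^ (∑ p ∈ finPairs r, (N * A p.1 * A p.2 + α p.1 * A p.2 + A p.1 * α p.2)) *
        (Nat.multinomial Finset.univ A : ℂ) *
        (v ^ (-((∑ p ∈ finPairs r, α p.1 * α p.2 : ℕ) : ℤ)) * Polynomial.aeval (v ^ 2) Gα) := by
  have hN0 : (N : ℂ) ≠ 0 := by
    exact_mod_cast (show N ≠ 0 by omega)
  have hv0 : v ≠ 0 := by rw [hv]; exact Complex.exp_ne_zero _
  have hvN : v ^ N = -1 := by
    rw [hv, ← Complex.exp_nat_mul, mul_div_cancel₀ _ hN0, Complex.exp_pi_mul_I]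
  have hq : IsPrimitiveRoot (v ^ 2) N := by
    have h := Complex.isPrimitiveRoot_exp N (by omega)
    have h2 : v ^ 2 = Complex.exp (2 * Real.pi * Complex.I / N) := by
      rw [hv, ← Complex.exp_nat_mul]
      congr 1
      push_cast
      ring
    rw [h2]
    exact h
  rw [qm_main N hN (v ^ 2) hq r A α hα a ha G Gα hG hGα]
  have hS : ∑ p ∈ finPairs r, a p.1 * a p.2 =
      N * (∑ p ∈ finPairs r, (N * A p.1 * A p.2 + α p.1 * A p.2 + A p.1 * α p.2)) +
        ∑ p ∈ finPairs r, α p.1 * α p.2 := by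
    rw [Finset.mul_sum, ← Finset.sum_add_distrib]
    refine Finset.sum_congr rfl fun p _ => ?_
    rw [ha, ha]
    ring
  rw [hS]
  generalize (∑ p ∈ finPairs r, (N * A p.1 * A p.2 + α p.1 * A p.2 + A p.1 * α p.2)) = s
  generalize (∑ p ∈ finPairs r, α p.1 * α p.2) = t
  have hpow : v ^ (-((N * s + t : ℕ) : ℤ)) = (-1 : ℂ) ^ s * v ^ (-(t : ℤ)) := by
    rw [zpow_neg, zpow_natCast, zpow_neg, zpow_natCast, pow_add, pow_mul, hvN, mul_inv,
      ← inv_pow, inv_neg_one]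
  rw [hpow]
  ring
end

section
/- Let N ≥ 1 and let ζ = e^{2πi/N} ∈ ℂ. Let a_1, …, a_r be natural numbers written as a_i = A_i·N + α_i with A_i, α_i ∈ ℕ and 0 ≤ α_i < N, and set a = a_1 + ⋯ + a_r and α = α_1 + ⋯ + α_r. Then the evaluation of the Gaussian multinomial polynomial satisfies G(a; a_1,…,a_r)(ζ) = ((A_1+⋯+A_r)! / (A_1!⋯A_r!)) · G(α; α_1,…,α_r)(ζ). -/
open Polynomial in
/-- Factor out `(1 - X^N)^M` from `∏_{j=1}^{MN} (1 - X^j)`. -/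
lemma gm_block (N : ℕ) (hN : 1 ≤ N) (ζ : ℂ) (h1 : ζ ^ N = 1) (M : ℕ) :
    ∃ Q : ℤ[X], ∏ j ∈ Finset.range (M * N), (1 - (X : ℤ[X]) ^ (j + 1)) = (1 - X ^ N) ^ M * Q ∧
      aeval ζ Q = (∏ j ∈ Finset.range (N - 1), (1 - ζ ^ (j + 1))) ^ M * (M.factorial : ℂ) := by
  induction M with
  | zero => exact ⟨1, by simp, by simp⟩
  | succ M ih =>
    obtain ⟨Q, hQ, hQe⟩ := ih
    refine ⟨Q * ((∏ j ∈ Finset.range (N - 1), (1 - (X : ℤ[X]) ^ (M * N + j + 1))) *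
      ∑ k ∈ Finset.range (M + 1), ((X : ℤ[X]) ^ N) ^ k), ?_, ?_⟩
    · rw [Nat.succ_mul, Finset.prod_range_add, hQ]
      obtain ⟨n, rfl⟩ : ∃ n, N = n + 1 := ⟨N - 1, by omega⟩
      rw [Finset.prod_range_succ]
      have hg := mul_neg_geom_sum ((X : ℤ[X]) ^ (n + 1)) (M + 1)
      have e : M * (n + 1) + n + 1 = (n + 1) * (M + 1) := by ring
      rw [e, pow_mul, ← hg]
      simp only [Nat.add_sub_cancel]
      ring
    · have hp : ∀ j, ζ ^ (M * N + j + 1) = ζ ^ (j + 1) := by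
        intro j
        rw [add_assoc, pow_add, mul_comm M N, pow_mul, h1]; simp
      simp only [map_mul, map_prod, map_sub, map_one, map_pow, aeval_X, map_sum, hp, hQe, h1,
        one_pow, Finset.sum_const, Finset.card_range, nsmul_eq_mul, mul_one, Nat.factorial_succ]
      push_cast
      ring

open Polynomial in
lemma gm_full (N : ℕ) (hN : 1 ≤ N) (ζ : ℂ) (h1 : ζ ^ N = 1) (M m : ℕ) :
    ∃ Q : ℤ[X], ∏ j ∈ Finset.range (M * N + m), (1 - (X : ℤ[X]) ^ (j + 1)) =
        (1 - X ^ N) ^ M * Q ∧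
      aeval ζ Q = (∏ j ∈ Finset.range (N - 1), (1 - ζ ^ (j + 1))) ^ M * (M.factorial : ℂ) *
        ∏ j ∈ Finset.range m, (1 - ζ ^ (j + 1)) := by
  obtain ⟨Q, hQ, hQe⟩ := gm_block N hN ζ h1 M
  refine ⟨Q * ∏ j ∈ Finset.range m, (1 - (X : ℤ[X]) ^ (M * N + j + 1)), ?_, ?_⟩
  · rw [Finset.prod_range_add, hQ, mul_assoc]
  · have hp : ∀ j, ζ ^ (M * N + j + 1) = ζ ^ (j + 1) := by
      intro j
      rw [add_assoc, pow_add, mul_comm M N, pow_mul, h1]; simp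
    simp only [map_mul, map_prod, map_sub, map_one, map_pow, aeval_X, hp, hQe]

/-- Evaluation at `ζ = e^{2πi/N}` of the Gaussian multinomial: if `a_i = A_i N + α_i`
with `0 ≤ α_i < N`, and `G`, `Gα` are the Gaussian multinomial polynomials,
characterized by `G(x) ∏_i ∏_{j=1}^{a_i} (1-x^j) = ∏_{j=1}^{a} (1-x^j)` (and similarly
for `Gα` with the `α_i`), then
`G(ζ) = ((A_1 + ⋯ + A_r)! / (A_1! ⋯ A_r!)) · Gα(ζ)`. -/
theorem gauss_multinomial_at_root_of_unity
    (N : ℕ) (hN : 1 ≤ N) (r : ℕ) (A α : Fin r → ℕ) (hα : ∀ i, α i < N)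
    (a : Fin r → ℕ) (ha : ∀ i, a i = A i * N + α i)
    (G Gα : Polynomial ℤ)
    (hG : G * ∏ i, ∏ j ∈ Finset.range (a i), (1 - Polynomial.X ^ (j + 1)) =
      ∏ j ∈ Finset.range (∑ i, a i), (1 - Polynomial.X ^ (j + 1)))
    (hGα : Gα * ∏ i, ∏ j ∈ Finset.range (α i), (1 - Polynomial.X ^ (j + 1)) =
      ∏ j ∈ Finset.range (∑ i, α i), (1 - Polynomial.X ^ (j + 1)))
    (ζ : ℂ) (hζ : ζ = Complex.exp (2 * Real.pi * Complex.I / N)) :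
    Polynomial.aeval ζ G =
      (Nat.multinomial Finset.univ A : ℂ) * Polynomial.aeval ζ Gα := by
  have hprim : IsPrimitiveRoot ζ N := hζ ▸ Complex.isPrimitiveRoot_exp N (by omega)
  have h1 := hprim.pow_eq_one
  have hne : ∀ m, m < N → ∏ j ∈ Finset.range m, (1 - ζ ^ (j + 1)) ≠ 0 := by
    intro m hm
    rw [Finset.prod_ne_zero_iff]
    intro j hj
    have hj := Finset.mem_range.mp hj
    rw [sub_ne_zero]
    exact (hprim.pow_ne_one_of_pos_of_lt (by omega) (by omega)).symm
  have hc := hne (N - 1) (by omega)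
  choose Q hQ hQe using fun i => gm_full N hN ζ h1 (A i) (α i)
  obtain ⟨T, hT, hTe⟩ := gm_full N hN ζ h1 (∑ i, A i) (∑ i, α i)
  have hs : ∑ i, a i = (∑ i, A i) * N + ∑ i, α i := by
    simp only [ha, Finset.sum_add_distrib, Finset.sum_mul]
  rw [hs, hT] at hG
  simp only [ha, hQ] at hG
  rw [Finset.prod_mul_distrib, Finset.prod_pow_eq_pow_sum] at hG
  have hX : (1 - (Polynomial.X : Polynomial ℤ) ^ N) ^ (∑ i, A i) ≠ 0 := by
    apply pow_ne_zero
    intro h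
    have := congrArg (Polynomial.eval 2) h
    simp only [Polynomial.eval_sub, Polynomial.eval_one, Polynomial.eval_pow, Polynomial.eval_X,
      Polynomial.eval_zero] at this
    have h2 : (1 : ℤ) < 2 ^ N := one_lt_pow₀ (by norm_num) (by omega)
    omega
  have hG' : G * ∏ i, Q i = T := by
    apply mul_left_cancel₀ hX
    rw [← hG]; ring
  have e1 := congrArg (Polynomial.aeval ζ) hG'
  have e2 := congrArg (Polynomial.aeval ζ) hGα
  simp only [map_mul, map_prod, hQe, hTe, Finset.prod_mul_distrib,
    Finset.prod_pow_eq_pow_sum] at e1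
  simp only [map_mul, map_prod, map_sub, map_one, map_pow, Polynomial.aeval_X] at e2
  have hm := congrArg (Nat.cast : ℕ → ℂ) (Nat.multinomial_spec Finset.univ A)
  push_cast at hm
  rw [← e2, ← hm] at e1
  have hP : ∏ i, ∏ j ∈ Finset.range (α i), (1 - ζ ^ (j + 1)) ≠ 0 :=
    Finset.prod_ne_zero_iff.mpr fun i _ => hne _ (hα i)
  have hF : ∏ i, ((A i).factorial : ℂ) ≠ 0 :=
    Finset.prod_ne_zero_iff.mpr fun i _ => by exact_mod_cast (A i).factorial_ne_zero
  apply mul_right_cancel₀ (mul_ne_zero (mul_ne_zero (pow_ne_zero (∑ i, A i) hc) hF) hP)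
  rw [e1]; ring
end
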